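/- Let Λ be a measurable space, μ a probability measure on Λ, and 𝒩, 𝒳 two sets of probability measures on Λ. Let P₁, P₂, P₃ : Λ → ℝ be measurable functions with 0 ≤ Pⱼ(λ) and P₁(λ) + P₂(λ) + P₃(λ) = 1 for every λ ∈ Λ, and suppose ∫ P₁ dμ = 0, ∫ P₂ dν = 0 for every ν ∈ 𝒩, and ∫ P₃ dχ = 0 for every χ ∈ 𝒳. Then for every measurable Ω ⊆ Λ with ν(Ω) = 1 for every ν ∈ 𝒩 and χ(Ω) = 1 for every χ ∈ 𝒳, there exist measurable sets Ω′, Ω″ ⊆ Λ with ν(Ω′) = 1 for every ν ∈ 𝒩, χ(Ω″) = 1 for every χ ∈ 𝒳, and μ(Ω) ≥ μ(Ω′) + μ(Ω″). -/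

import Mathlib

open MeasureTheory

/-- A measurable function with values in the unit interval and zero integral vanishes a.e. -/
theorem ae_zero_of_integral_zero {Λ : Type*} [MeasurableSpace Λ] (ν : Measure Λ)
    [IsProbabilityMeasure ν] (P : Λ → ℝ) (hm : Measurable P) (h0 : ∀ x, 0 ≤ P x)
    (hle : ∀ x, P x ≤ 1) (h : ∫ x, P x ∂ν = 0) : ∀ᵐ x ∂ν, P x = 0 := by
  have hi : Integrable P ν := by
    refine Integrable.of_bound hm.aestronglyMeasurable 1 (Filter.Eventually.of_forall fun x => ?_)
    rw [Real.norm_eq_abs, abs_of_nonneg (h0 x)]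
    exact hle x
  exact (integral_eq_zero_iff_of_nonneg h0 hi).1 h

/-- Intersecting a full-measure set with the zero set keeps full measure. -/
theorem inter_zero_full {Λ : Type*} [MeasurableSpace Λ] (ν : Measure Λ)
    (P : Λ → ℝ) (Ω : Set Λ) (hΩ : ν Ω = 1) (h : ∀ᵐ x ∂ν, P x = 0) :
    ν (Ω ∩ P ⁻¹' {0}) = 1 := by
  rw [← hΩ]
  apply measure_congr
  filter_upwards [h] with x hx
  apply propext
  exact ⟨fun hh => hh.1, fun hh => ⟨hh, hx⟩⟩

theorem antidistinguishability_structural {Λ : Type*} [MeasurableSpace Λ]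
    (μ : Measure Λ) [IsProbabilityMeasure μ]
    (N X : Set (Measure Λ))
    (hN : ∀ ν ∈ N, IsProbabilityMeasure ν) (hX : ∀ χ ∈ X, IsProbabilityMeasure χ)
    (P₁ P₂ P₃ : Λ → ℝ)
    (hm1 : Measurable P₁) (hm2 : Measurable P₂) (hm3 : Measurable P₃)
    (hpos : ∀ x : Λ, 0 ≤ P₁ x ∧ 0 ≤ P₂ x ∧ 0 ≤ P₃ x)
    (hsum : ∀ x : Λ, P₁ x + P₂ x + P₃ x = 1)
    (h1 : ∫ x, P₁ x ∂μ = 0)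
    (h2 : ∀ ν ∈ N, ∫ x, P₂ x ∂ν = 0)
    (h3 : ∀ χ ∈ X, ∫ x, P₃ x ∂χ = 0) :
    ∀ Ω : Set Λ, MeasurableSet Ω → (∀ ν ∈ N, ν Ω = 1) → (∀ χ ∈ X, χ Ω = 1) →
      ∃ Ω' Ω'' : Set Λ, MeasurableSet Ω' ∧ MeasurableSet Ω'' ∧
        (∀ ν ∈ N, ν Ω' = 1) ∧ (∀ χ ∈ X, χ Ω'' = 1) ∧
        μ Ω ≥ μ Ω' + μ Ω'' := by
  intro Ω hΩ hNΩ hXΩ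
  have hA : MeasurableSet (Ω ∩ P₂ ⁻¹' {0}) := hΩ.inter (hm2 (measurableSet_singleton 0))
  have hB : MeasurableSet (Ω ∩ P₃ ⁻¹' {0}) := hΩ.inter (hm3 (measurableSet_singleton 0))
  refine ⟨Ω ∩ P₂ ⁻¹' {0}, Ω ∩ P₃ ⁻¹' {0}, hA, hB, ?_, ?_, ?_⟩
  · intro ν hν
    haveI := hN ν hν
    exact inter_zero_full ν P₂ Ω (hNΩ ν hν) (ae_zero_of_integral_zero ν P₂ hm2
      (fun x => (hpos x).2.1) (fun x => by linarith [hpos x, hsum x, (hpos x).1, (hpos x).2.2])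
      (h2 ν hν))
  · intro χ hχ
    haveI := hX χ hχ
    exact inter_zero_full χ P₃ Ω (hXΩ χ hχ) (ae_zero_of_integral_zero χ P₃ hm3
      (fun x => (hpos x).2.2) (fun x => by linarith [hsum x, (hpos x).1, (hpos x).2.1])
      (h3 χ hχ))
  · have hz := ae_zero_of_integral_zero μ P₁ hm1 (fun x => (hpos x).1)
      (fun x => by linarith [hsum x, (hpos x).2.1, (hpos x).2.2]) h1
    have hnull : μ ((Ω ∩ P₂ ⁻¹' {0}) ∩ (Ω ∩ P₃ ⁻¹' {0})) = 0 := by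
      refine measure_mono_null ?_ (ae_iff.1 hz)
      rintro x ⟨⟨_, h2x⟩, ⟨_, h3x⟩⟩ h1x
      have e2 : P₂ x = 0 := h2x
      have e3 : P₃ x = 0 := h3x
      have e1 : P₁ x = 0 := h1x
      linarith [hsum x]
    rw [ge_iff_le, ← measure_union_add_inter _ hB, hnull, add_zero]
    exact measure_mono (Set.union_subset Set.inter_subset_left Set.inter_subset_left)
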